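/- For all x, y, z ∈ 𝓡, (x ⊗ y) ⊗ z ∼ x ⊗ (y ⊗ z). -/

import Mathlib

/-!
A decimal representation denotes a real number `val x`, and two representations of the same real
number have no gap between them: if `x ≺ z ≺ y` and `val x = val z = val y`, the first gap forces
`z` to end in zeros and the second forces it to end in nines. Suprema in `𝓡` can be taken truncation
by truncation and therefore commute with `val`, and `Ψ` negates the value. Hence `val` is
multiplicative, and associativity up to equivalence is associativity in `ℝ`.
-/

/-- The ambient space `𝓡` of decimal representations: an integer part together
with a sequence of digits in `{0,…,9}`. -/
abbrev DecimalRep := ℤ × (ℕ → Fin 10)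

namespace DecimalRep

open scoped Classical

/-- The truncation `[x]_k = x₀ + ∑_{i=1}^k x_i / 10^i` of `x` up to the `k`-th
digit, as a rational number. -/
def trunc (x : DecimalRep) (k : ℕ) : ℚ :=
  (x.1 : ℚ) + ∑ i ∈ Finset.range k, ((x.2 i : ℕ) : ℚ) / 10 ^ (i + 1)

/-- The order `⪯` on `𝓡`: `x ⪯ y` iff every truncation of `x` is at most the
corresponding truncation of `y`. -/
def le (x y : DecimalRep) : Prop := ∀ k : ℕ, trunc x k ≤ trunc y k

/-- The strict order `≺` on `𝓡`. -/
def lt (x y : DecimalRep) : Prop := le x y ∧ x ≠ y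

/-- Two decimal representations are equivalent ("have no gap") iff there is no
third element lying between them. -/
def equiv (x y : DecimalRep) : Prop :=
  ¬ ∃ z : DecimalRep, z ≠ x ∧ z ≠ y ∧
      ((le x z ∧ le z y) ∨ (le y z ∧ le z x))

/-- `𝓡₉`: decimal representations ending in an infinite string of nines. -/
def allNines (x : DecimalRep) : Prop := ∃ N : ℕ, ∀ k ≥ N, x.2 k = 9

/-- `ℚ_F`: decimal representations ending in an infinite string of zeros. -/
def finiteDec (x : DecimalRep) : Prop := ∃ N : ℕ, ∀ k ≥ N, x.2 k = 0

/-- The decimal expansion map `ι : ℚ → 𝓡`, satisfying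
`[ι(α)]_k = ⌊10^k·α⌋/10^k` for all `k`. -/
def iota (α : ℚ) : DecimalRep :=
  (⌊α⌋, fun k => ⟨(⌊α * 10 ^ (k + 1)⌋ % 10).toNat, by
    have h1 : (0 : ℤ) ≤ ⌊α * 10 ^ (k + 1)⌋ % 10 := Int.emod_nonneg _ (by norm_num)
    have h2 : ⌊α * 10 ^ (k + 1)⌋ % 10 < 10 := Int.emod_lt_of_pos _ (by norm_num)
    omega⟩)

/-- `M` is a least upper bound of `W` in `(𝓡,⪯)`. -/
def IsLub (W : Set DecimalRep) (M : DecimalRep) : Prop :=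
  (∀ w ∈ W, le w M) ∧ ∀ M' : DecimalRep, (∀ w ∈ W, le w M') → le M M'

/-- `M` is a greatest lower bound of `W` in `(𝓡,⪯)`. -/
def IsGlb (W : Set DecimalRep) (M : DecimalRep) : Prop :=
  (∀ w ∈ W, le M w) ∧ ∀ M' : DecimalRep, (∀ w ∈ W, le M' w) → le M' M

/-- The least upper bound of a set in `(𝓡,⪯)` (junk value if none exists). -/
noncomputable def sup (W : Set DecimalRep) : DecimalRep :=
  if h : ∃ M, IsLub W M then h.choose else default

/-- The greatest lower bound of a set in `(𝓡,⪯)` (junk value if none exists). -/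
noncomputable def inf (W : Set DecimalRep) : DecimalRep :=
  if h : ∃ M, IsGlb W M then h.choose else default

/-- Addition `x ⊕ y := sup {ι([x]_k + [y]_k) : k ∈ ℕ}` on `𝓡`. -/
noncomputable def add (x y : DecimalRep) : DecimalRep :=
  sup { z | ∃ k : ℕ, z = iota (trunc x k + trunc y k) }

/-- The "additive inverse" map `Ψ(x₀.x₁x₂⋯) = (−1−x₀).(9−x₁)(9−x₂)⋯`. -/
def psi (x : DecimalRep) : DecimalRep :=
  (-1 - x.1, fun k => ⟨9 - (x.2 k).val, by have := (x.2 k).isLt; omega⟩)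

/-- The signal map: `0` on the nonnegative part, `1` on the negative part. -/
noncomputable def sign (x : DecimalRep) : ℕ :=
  if le (iota 0) x then 0 else 1

/-- The absolute value `‖x‖ := max {x, Ψ(x)}` with respect to `⪯`. -/
noncomputable def norm (x : DecimalRep) : DecimalRep :=
  if le x (psi x) then psi x else x

/-- Multiplication
`x ⊗ y := Ψ^(sign x + sign y) (sup {ι([‖x‖]_k · [‖y‖]_k) : k ∈ ℕ})` on `𝓡`. -/
noncomputable def mul (x y : DecimalRep) : DecimalRep :=
  psi^[sign x + sign y]
    (sup { z | ∃ k : ℕ, z = iota (trunc (norm x) k * trunc (norm y) k) })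

/-- The multiplicative inverse
`x⁻¹ := Ψ^(sign x) (inf {ι(1/[‖x‖]_k) : k ∈ ℕ, [‖x‖]_k > 0})`. -/
noncomputable def inv (x : DecimalRep) : DecimalRep :=
  psi^[sign x]
    (inf { z | ∃ k : ℕ, 0 < trunc (norm x) k ∧ z = iota (1 / trunc (norm x) k) })

/-- A sequence of rationals is Cauchy. -/
def IsCauchy (x : ℕ → ℚ) : Prop :=
  ∀ ε : ℚ, 0 < ε → ∃ N : ℕ, ∀ m n : ℕ, N ≤ m → N ≤ n → |x m - x n| < ε

/-- The upper limit `inf { sup {f k : k ≥ n} : n ∈ ℕ }` of a sequence in `𝓡`. -/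
noncomputable def upperLimit (f : ℕ → DecimalRep) : DecimalRep :=
  inf { z | ∃ n : ℕ, z = sup { w | ∃ k : ℕ, n ≤ k ∧ w = f k } }

/-- The lower limit `sup { inf {f k : k ≥ n} : n ∈ ℕ }` of a sequence in `𝓡`. -/
noncomputable def lowerLimit (f : ℕ → DecimalRep) : DecimalRep :=
  sup { z | ∃ n : ℕ, z = inf { w | ∃ k : ℕ, n ≤ k ∧ w = f k } }

end DecimalRep

namespace DecimalRep

open Filter Topology

variable {x y z M : DecimalRep} {W : Set DecimalRep}

section Trunc

lemma trunc_zero (x : DecimalRep) : trunc x 0 = x.1 := by simp [trunc]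

lemma trunc_succ (x : DecimalRep) (k : ℕ) :
    trunc x (k + 1) = trunc x k + (x.2 k : ℕ) / 10 ^ (k + 1) := by
  simp only [trunc, Finset.sum_range_succ, add_assoc]

lemma trunc_mono (x : DecimalRep) : Monotone (trunc x) :=
  monotone_nat_of_le_succ fun k => by
    rw [trunc_succ]
    exact le_add_of_nonneg_right (by positivity)

lemma trunc_add_inv_pow_anti (x : DecimalRep) :
    Antitone fun k => trunc x k + (10 ^ k : ℚ)⁻¹ :=
  antitone_nat_of_succ_le fun k => by
    have digit_le : ((x.2 k : ℕ) : ℚ) ≤ 9 := by exact_mod_cast Nat.le_of_lt_succ (x.2 k).isLt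
    calc trunc x (k + 1) + (10 ^ (k + 1) : ℚ)⁻¹
        ≤ trunc x k + 9 / 10 ^ (k + 1) + (10 ^ (k + 1) : ℚ)⁻¹ := by rw [trunc_succ]; gcongr
      _ = trunc x k + (10 ^ k : ℚ)⁻¹ := by rw [pow_succ]; field

lemma trunc_lt_trunc_add_inv_pow (x : DecimalRep) (j k : ℕ) :
    trunc x j < trunc x k + (10 ^ k : ℚ)⁻¹ :=
  calc trunc x j ≤ trunc x (max j k) := trunc_mono x (le_max_left j k)
    _ < trunc x (max j k) + (10 ^ max j k : ℚ)⁻¹ := lt_add_of_pos_right _ (by positivity)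
    _ ≤ trunc x k + (10 ^ k : ℚ)⁻¹ := trunc_add_inv_pow_anti x (le_max_right j k)

lemma trunc_nonneg (hx : 0 ≤ x.1) (k : ℕ) : 0 ≤ trunc x k :=
  calc (0 : ℚ) ≤ x.1 := by exact_mod_cast hx
    _ = trunc x 0 := (trunc_zero x).symm
    _ ≤ trunc x k := trunc_mono x k.zero_le

lemma le.fst_le (h : le x y) : x.1 ≤ y.1 := by
  have := h 0
  rw [trunc_zero, trunc_zero] at this
  exact_mod_cast this

lemma le_of_fst_lt_fst (h : x.1 < y.1) : le x y := fun k =>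
  calc trunc x k ≤ x.1 + 1 := by simpa [trunc_zero] using (trunc_lt_trunc_add_inv_pow x k 0).le
    _ ≤ y.1 := by exact_mod_cast h
    _ = trunc y 0 := (trunc_zero y).symm
    _ ≤ trunc y k := trunc_mono y k.zero_le

end Trunc

section ScaledTrunc

/-- The integer `10 ^ k * [x]_k`: it turns the order on `𝓡` into inequalities of integers. -/
def scaledTrunc (x : DecimalRep) : ℕ → ℤ
  | 0 => x.1
  | k + 1 => 10 * scaledTrunc x k + (x.2 k : ℕ)

/-- The decimal representation with prescribed scaled truncations `T`. It is meaningful only if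
`T (k + 1) / 10 = T k` for all `k`; see `scaledTrunc_ofScaledTrunc`. -/
def ofScaledTrunc (T : ℕ → ℤ) : DecimalRep :=
  (T 0, fun k => ⟨(T (k + 1) % 10).toNat, by omega⟩)

lemma trunc_eq_scaledTrunc_div (x : DecimalRep) (k : ℕ) :
    trunc x k = scaledTrunc x k / 10 ^ k := by
  induction k with
  | zero => simp [trunc_zero, scaledTrunc]
  | succ k ih =>
    rw [trunc_succ, ih, scaledTrunc, pow_succ]
    push_cast
    field

lemma trunc_le_trunc_iff {k : ℕ} : trunc x k ≤ trunc y k ↔ scaledTrunc x k ≤ scaledTrunc y k := by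
  rw [trunc_eq_scaledTrunc_div, trunc_eq_scaledTrunc_div,
    div_le_div_iff_of_pos_right (by positivity), Int.cast_le]

lemma scaledTrunc_succ_ediv (x : DecimalRep) (k : ℕ) :
    scaledTrunc x (k + 1) / 10 = scaledTrunc x k := by
  rw [scaledTrunc]
  omega

lemma scaledTrunc_injective : Function.Injective scaledTrunc := fun x y h =>
  Prod.ext (congrFun h 0) <| funext fun k => Fin.ext <| by
    have h₀ := congrFun h k
    have h₁ := congrFun h (k + 1)
    rw [scaledTrunc, scaledTrunc] at h₁
    omega

lemma scaledTrunc_ofScaledTrunc {T : ℕ → ℤ} (hT : ∀ k, T (k + 1) / 10 = T k) (k : ℕ) :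
    scaledTrunc (ofScaledTrunc T) k = T k := by
  induction k with
  | zero => rfl
  | succ k ih =>
    have := hT k
    rw [scaledTrunc, ih]
    simp only [ofScaledTrunc]
    omega

lemma le.antisymm (hxy : le x y) (hyx : le y x) : x = y :=
  scaledTrunc_injective <| funext fun k =>
    le_antisymm (trunc_le_trunc_iff.1 (hxy k)) (trunc_le_trunc_iff.1 (hyx k))

lemma le.exists_trunc_add_inv_pow_le (h : le x y) (hne : x ≠ y) :
    ∃ k, trunc x k + (10 ^ k : ℚ)⁻¹ ≤ trunc y k := by
  obtain ⟨k, hk⟩ : ∃ k, ¬ trunc y k ≤ trunc x k := by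
    by_contra! hyx
    exact hne (h.antisymm hyx)
  refine ⟨k, ?_⟩
  rw [trunc_le_trunc_iff, not_le] at hk
  rw [trunc_eq_scaledTrunc_div, trunc_eq_scaledTrunc_div, inv_eq_one_div, ← add_div]
  gcongr
  exact_mod_cast hk

end ScaledTrunc

section Val

/-- The real number that a decimal representation denotes. -/
noncomputable def val (x : DecimalRep) : ℝ := x.1 + Real.ofDigits x.2

lemma val_eq_trunc_add (x : DecimalRep) (k : ℕ) :
    val x = trunc x k + (10 ^ k : ℝ)⁻¹ * Real.ofDigits fun i => x.2 (i + k) := by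
  rw [val, Real.ofDigits_eq_sum_add_ofDigits x.2 k]
  simp [trunc, Real.ofDigitsTerm, div_eq_mul_inv, add_assoc]

lemma trunc_le_val (x : DecimalRep) (k : ℕ) : (trunc x k : ℝ) ≤ val x := by
  rw [val_eq_trunc_add x k]
  exact le_add_of_nonneg_right (mul_nonneg (by positivity) (Real.ofDigits_nonneg _))

lemma val_le_trunc_add_inv_pow (x : DecimalRep) (k : ℕ) :
    val x ≤ (trunc x k + (10 ^ k : ℚ)⁻¹ : ℚ) := by
  rw [val_eq_trunc_add x k]
  push_cast
  gcongr
  exact mul_le_of_le_one_right (by positivity) (Real.ofDigits_le_one _)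

lemma tendsto_inv_ten_pow : Tendsto (fun k : ℕ => (10 ^ k : ℝ)⁻¹) atTop (𝓝 0) :=
  tendsto_inv_atTop_zero.comp (tendsto_pow_atTop_atTop_of_one_lt (by norm_num))

lemma tendsto_trunc (x : DecimalRep) :
    Tendsto (fun k => (trunc x k : ℝ)) atTop (𝓝 (val x)) := by
  refine tendsto_of_tendsto_of_tendsto_of_le_of_le (g := fun k => val x - (10 ^ k : ℝ)⁻¹)
    (by simpa using tendsto_inv_ten_pow.const_sub (val x)) tendsto_const_nhds
    (fun k => ?_) (trunc_le_val x)
  simpa using val_le_trunc_add_inv_pow x k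

lemma le.val_le (h : le x y) : val x ≤ val y :=
  le_of_tendsto_of_tendsto' (tendsto_trunc x) (tendsto_trunc y) fun k => by exact_mod_cast h k

lemma val_lt_val_of_between (hxz : le x z) (hne : x ≠ z) (hzy : le z y) (hne' : z ≠ y) :
    val x < val y := by
  obtain ⟨k, hk⟩ := hxz.exists_trunc_add_inv_pow_le hne
  obtain ⟨j, hj⟩ := hzy.exists_trunc_add_inv_pow_le hne'
  calc val x ≤ (trunc x k + (10 ^ k : ℚ)⁻¹ : ℚ) := val_le_trunc_add_inv_pow x k
    _ ≤ trunc z k := by exact_mod_cast hk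
    _ < (trunc z j + (10 ^ j : ℚ)⁻¹ : ℚ) := by exact_mod_cast trunc_lt_trunc_add_inv_pow z k j
    _ ≤ trunc y j := by exact_mod_cast hj
    _ ≤ val y := trunc_le_val y j

lemma equiv_of_val_eq (h : val x = val y) : equiv x y := by
  rintro ⟨z, hzx, hzy, ⟨hxz, hzy'⟩ | ⟨hyz, hzx'⟩⟩
  · exact (val_lt_val_of_between hxz hzx.symm hzy' hzy).ne h
  · exact (val_lt_val_of_between hyz hzy.symm hzx' hzx).ne' h

end Val

section Psi

lemma ofDigits_add_ofDigits_rev {b : ℕ} (hb : 1 < b) (d : ℕ → Fin b) :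
    Real.ofDigits d + Real.ofDigits (fun i => (d i).rev) = 1 := by
  rw [← Real.ofDigits_const_last_eq_one' hb, Real.ofDigits, Real.ofDigits, Real.ofDigits,
    ← Real.summable_ofDigitsTerm.tsum_add Real.summable_ofDigitsTerm]
  refine tsum_congr fun i => ?_
  have digit_sum : ((d i : ℕ) : ℝ) + ((d i).rev : ℕ) = (b - 1 : ℕ) := by
    rw [Fin.val_rev]
    exact_mod_cast (by omega : (d i : ℕ) + (b - (d i + 1)) = b - 1)
  simp only [Real.ofDigitsTerm, ← add_mul, digit_sum]

lemma val_psi (x : DecimalRep) : val (psi x) = -val x := by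
  have digits_psi : (psi x).2 = fun i => (x.2 i).rev :=
    funext fun i => Fin.ext (by simp only [psi, Fin.val_rev]; omega)
  have fst_psi : (((psi x).1 : ℤ) : ℝ) = -1 - x.1 := by simp [psi]
  rw [val, val, digits_psi, fst_psi]
  linarith [ofDigits_add_ofDigits_rev (by norm_num) x.2]

lemma val_iterate_psi (m : ℕ) (x : DecimalRep) : val (psi^[m] x) = (-1) ^ m * val x := by
  induction m with
  | zero => simp
  | succ m ih => rw [Function.iterate_succ_apply', val_psi, ih, pow_succ]; ring

lemma le_psi_iff : le x (psi x) ↔ x.1 < 0 := by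
  have fst_psi : (psi x).1 = -1 - x.1 := rfl
  refine ⟨fun h => ?_, fun h => le_of_fst_lt_fst (by omega)⟩
  have := h.fst_le
  omega

end Psi

section Iota

lemma floor_mul_pow_succ_ediv {K : Type*} [Field K] [LinearOrder K] [IsStrictOrderedRing K]
    [FloorRing K] {b : ℕ} (hb : b ≠ 0) (α : K) (k : ℕ) :
    ⌊α * b ^ (k + 1)⌋ / b = ⌊α * b ^ k⌋ := by
  have : (b : K) ≠ 0 := Nat.cast_ne_zero.2 hb
  rw [← Int.floor_div_natCast, pow_succ]
  congr 1
  field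

lemma scaledTrunc_iota (α : ℚ) (k : ℕ) : scaledTrunc (iota α) k = ⌊α * 10 ^ k⌋ := by
  have : iota α = ofScaledTrunc fun k => ⌊α * 10 ^ k⌋ := by simp [iota, ofScaledTrunc]
  rw [this, scaledTrunc_ofScaledTrunc (floor_mul_pow_succ_ediv (b := 10) (by norm_num) α)]

lemma trunc_iota_le (α : ℚ) (k : ℕ) : trunc (iota α) k ≤ α := by
  rw [trunc_eq_scaledTrunc_div, scaledTrunc_iota, div_le_iff₀ (by positivity)]
  exact Int.floor_le _

lemma le_trunc_iota_add_inv_pow (α : ℚ) (k : ℕ) :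
    α ≤ trunc (iota α) k + (10 ^ k : ℚ)⁻¹ := by
  rw [trunc_eq_scaledTrunc_div, scaledTrunc_iota, inv_eq_one_div, ← add_div,
    le_div_iff₀ (by positivity)]
  exact (Int.lt_floor_add_one _).le

lemma val_iota (α : ℚ) : val (iota α) = α := by
  refine le_antisymm
    (le_of_tendsto' (tendsto_trunc _) fun k => by exact_mod_cast trunc_iota_le α k) ?_
  have := (tendsto_trunc (iota α)).add tendsto_inv_ten_pow
  rw [add_zero] at this
  exact ge_of_tendsto' this fun k => by
    simpa using (Rat.cast_le (K := ℝ)).2 (le_trunc_iota_add_inv_pow α k)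

lemma iota_le_iota {α β : ℚ} (h : α ≤ β) : le (iota α) (iota β) := fun k => by
  rw [trunc_le_trunc_iff, scaledTrunc_iota, scaledTrunc_iota]
  gcongr

lemma iota_zero_le_iff : le (iota 0) x ↔ 0 ≤ x.1 := by
  refine ⟨fun h => ?_, fun h k => (trunc_iota_le 0 k).trans (trunc_nonneg h k)⟩
  simpa [iota] using h.fst_le

end Iota

section Sup

lemma IsLub.sup_eq (h : IsLub W M) : sup W = M := by
  have hW : ∃ M, IsLub W M := ⟨M, h⟩
  have hsup : IsLub W (sup W) := by
    rw [sup, dif_pos hW]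
    exact hW.choose_spec
  exact (hsup.2 M h.1).antisymm (h.2 _ hsup.1)

lemma isGreatest_scaledTrunc_sup (hne : W.Nonempty) (hbdd : ∃ M, ∀ w ∈ W, le w M) (k : ℕ) :
    IsGreatest ((scaledTrunc · k) '' W) (scaledTrunc (sup W) k) := by
  obtain ⟨B, hB⟩ := hbdd
  have exists_max (k : ℕ) : ∃ t, IsGreatest ((scaledTrunc · k) '' W) t :=
    BddAbove.exists_isGreatest_of_nonempty
      ⟨scaledTrunc B k, Set.forall_mem_image.2 fun w hw => trunc_le_trunc_iff.1 (hB w hw k)⟩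
      (hne.image _)
  choose T hT using exists_max
  have T_succ_ediv (k : ℕ) : T (k + 1) / 10 = T k := by
    have ediv_mono : Monotone (· / (10 : ℤ)) := fun _ _ => Int.ediv_le_ediv (by norm_num)
    have ediv_greatest := ediv_mono.map_isGreatest (hT (k + 1))
    simp only [Set.image_image, scaledTrunc_succ_ediv] at ediv_greatest
    exact ediv_greatest.unique (hT k)
  have hsup : IsLub W (ofScaledTrunc T) := by
    refine ⟨fun w hw k => ?_, fun M hM k => ?_⟩
    · rw [trunc_le_trunc_iff, scaledTrunc_ofScaledTrunc T_succ_ediv]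
      exact (hT k).2 (Set.mem_image_of_mem _ hw)
    · rw [trunc_le_trunc_iff, scaledTrunc_ofScaledTrunc T_succ_ediv]
      obtain ⟨w, hw, hTw⟩ := (hT k).1
      exact hTw ▸ trunc_le_trunc_iff.1 (hM w hw k)
  rw [hsup.sup_eq, scaledTrunc_ofScaledTrunc T_succ_ediv]
  exact hT k

lemma isLUB_val_sup (hne : W.Nonempty) (hbdd : ∃ M, ∀ w ∈ W, le w M) :
    IsLUB (val '' W) (val (sup W)) := by
  have greatest := isGreatest_scaledTrunc_sup hne hbdd
  constructor
  · rintro _ ⟨w, hw, rfl⟩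
    exact le.val_le fun k =>
      trunc_le_trunc_iff.2 ((greatest k).2 (Set.mem_image_of_mem _ hw))
  · intro r hr
    refine le_of_tendsto' (tendsto_trunc _) fun k => ?_
    obtain ⟨w, hw, hwk⟩ := (greatest k).1
    calc (trunc (sup W) k : ℝ) = trunc w k := by
          rw [trunc_eq_scaledTrunc_div, trunc_eq_scaledTrunc_div, ← hwk]
      _ ≤ val w := trunc_le_val w k
      _ ≤ r := hr (Set.mem_image_of_mem _ hw)

lemma val_sup_iota {ι : Type*} {t : ι → ℚ} {v : ℝ} (hv : IsLUB (Set.range fun i => (t i : ℝ)) v) :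
    val (sup {z | ∃ i, z = iota (t i)}) = v := by
  have hW : {z | ∃ i, z = iota (t i)} = Set.range fun i => iota (t i) := by
    ext; simp [eq_comm]
  have : Nonempty ι := Set.range_nonempty_iff_nonempty.1 hv.nonempty
  have bdd : ∃ M, ∀ w ∈ Set.range fun i => iota (t i), le w M := by
    refine ⟨iota ⌈v⌉, Set.forall_mem_range.2 fun i => iota_le_iota ?_⟩
    exact_mod_cast (hv.1 (Set.mem_range_self i)).trans (Int.le_ceil v)
  have hsup := isLUB_val_sup (Set.range_nonempty _) bdd
  rw [← Set.range_comp] at hsup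
  simp only [Function.comp_def, val_iota] at hsup
  rw [hW]
  exact hsup.unique hv

end Sup

section Mul

lemma norm_fst_nonneg (x : DecimalRep) : 0 ≤ (norm x).1 := by
  simp only [norm, le_psi_iff]
  split_ifs with hx
  · simp only [psi]
    omega
  · exact not_lt.1 hx

lemma neg_one_pow_sign_mul_val_norm (x : DecimalRep) : (-1) ^ sign x * val (norm x) = val x := by
  simp only [sign, norm, iota_zero_le_iff, le_psi_iff]
  rcases lt_or_ge x.1 0 with hx | hx
  · simp only [if_neg hx.not_ge, if_pos hx, val_psi, pow_one, neg_one_mul, neg_neg]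
  · simp only [if_pos hx, if_neg hx.not_gt, pow_zero, one_mul]

lemma val_mul (x y : DecimalRep) : val (mul x y) = val x * val y := by
  have mono : Monotone fun k => ((trunc (norm x) k * trunc (norm y) k : ℚ) : ℝ) :=
    Rat.cast_mono.comp <| (trunc_mono _).mul (trunc_mono _)
      (trunc_nonneg (norm_fst_nonneg x)) (trunc_nonneg (norm_fst_nonneg y))
  have lim : Tendsto (fun k => ((trunc (norm x) k * trunc (norm y) k : ℚ) : ℝ)) atTop
      (𝓝 (val (norm x) * val (norm y))) := by
    simpa using (tendsto_trunc (norm x)).mul (tendsto_trunc (norm y))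
  rw [mul, val_iterate_psi, val_sup_iota (isLUB_of_tendsto_atTop mono lim), pow_add,
    mul_mul_mul_comm, neg_one_pow_sign_mul_val_norm, neg_one_pow_sign_mul_val_norm]

end Mul

end DecimalRep

open DecimalRep in
/-- Multiplication on `𝓡` is associative up to equivalence. -/
theorem mul_assoc_equiv (x y z : DecimalRep) :
    equiv (mul (mul x y) z) (mul x (mul y z)) :=
  equiv_of_val_eq (by simp only [val_mul, mul_assoc])
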